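/- Let ρ and σ be density matrices on a finite-dimensional Hilbert space. Then S_∞(ρ‖σ) ≥ S(ρ‖σ), i.e., the max-relative entropy is at least the relative entropy. -/

import Mathlib

open scoped Kronecker ComplexOrder Classical

/-- A density matrix: positive semidefinite with unit trace. -/
def IsDensity {n : Type*} [Fintype n] [DecidableEq n] (ρ : Matrix n n ℂ) : Prop :=
  ρ.PosSemidef ∧ ρ.trace = 1

/-- Matrix logarithm of a Hermitian matrix via the spectral theorem
(with the convention `log 0 = 0` on the kernel; junk value `0` if not Hermitian). -/
noncomputable def mlog {n : Type*} [Fintype n] [DecidableEq n]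
    (M : Matrix n n ℂ) : Matrix n n ℂ :=
  if h : M.IsHermitian then
    (h.eigenvectorUnitary : Matrix n n ℂ) *
      Matrix.diagonal (fun i => (Real.log (h.eigenvalues i) : ℂ)) *
        star (h.eigenvectorUnitary : Matrix n n ℂ)
  else 0

/-- Quantum relative entropy `S(ρ‖σ) = Tr(ρ log ρ) - Tr(ρ log σ)`, with value `⊤`
when the support of `ρ` is not contained in the support of `σ`. -/
noncomputable def relEnt {n : Type*} [Fintype n] [DecidableEq n]
    (ρ σ : Matrix n n ℂ) : EReal :=
  if ∀ v : n → ℂ, σ.mulVec v = 0 → ρ.mulVec v = 0 then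
    ((((ρ * mlog ρ).trace - (ρ * mlog σ).trace).re : ℝ) : EReal)
  else ⊤

/-- Max-relative entropy `S_∞(ρ‖σ) = inf {k : ρ ≤ 2^k σ}` (as an extended real). -/
noncomputable def maxRelEnt {n : Type*} [Fintype n] [DecidableEq n]
    (ρ σ : Matrix n n ℂ) : EReal :=
  sInf {k : EReal | ∃ r : ℝ, k = (r : EReal) ∧
    ((((2 : ℝ) ^ r : ℝ) : ℂ) • σ - ρ).PosSemidef}

/-!
If `ρ ≤ c σ`, then operator monotonicity of the logarithm suggests `log ρ ≤ log c + log σ`, and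
pairing with `ρ` under the trace gives `S(ρ‖σ) ≤ log c`. Operator monotonicity needs invertible
arguments, so the eigenvalue `0` is first replaced by `1` in `σ`, which leaves `log σ` unchanged
because of the convention `log 0 = 0`, and by a small `δ > 0` in `ρ`, which leaves `ρ log ρ`
unchanged. The price is a constant `d > c` instead of `c`, and `d` is arbitrarily close to `c`.
-/

section FillKernel

variable {A : Type*} [CStarAlgebra A] {a : A} {δ : ℝ}

/-- The element `a + δ p`, where `p` is the projection onto the kernel of `a`, used to make
`a` invertible. It is encoded by the functional calculus, so it is meaningful only when `0` is not
an accumulation point of the spectrum of `a`. -/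
noncomputable def fillKernel (δ : ℝ) (a : A) : A :=
  cfc (fun x : ℝ => if x = 0 then δ else x) a

theorem log_fillKernel [Finite (spectrum ℝ a)] (ha : IsSelfAdjoint a) (δ : ℝ) :
    CFC.log (fillKernel δ a) =
      cfc (fun x : ℝ => if x = 0 then Real.log δ else Real.log x) a := by
  rw [CFC.log, fillKernel, ← cfc_comp' Real.log _ a (((Set.toFinite _).image _).continuousOn _)
    ((Set.toFinite _).continuousOn _)]
  simp only [apply_ite]

theorem log_fillKernel_one [Finite (spectrum ℝ a)] (ha : IsSelfAdjoint a) :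
    CFC.log (fillKernel 1 a) = CFC.log a := by
  rw [log_fillKernel ha, CFC.log]
  congr with x
  split_ifs with hx <;> simp [hx]

theorem mul_log_fillKernel [Finite (spectrum ℝ a)] (ha : IsSelfAdjoint a) (δ : ℝ) :
    a * CFC.log (fillKernel δ a) = a * CFC.log a := by
  have mul_cfc (f : ℝ → ℝ) : a * cfc f a = cfc (fun x => x * f x) a := by
    rw [cfc_mul (fun x => x) f a (by fun_prop) ((Set.toFinite _).continuousOn f), cfc_id' ℝ a]
  rw [log_fillKernel ha, CFC.log, mul_cfc, mul_cfc]
  congr with x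
  split_ifs with hx <;> simp [hx]

variable [PartialOrder A] [StarOrderedRing A]

theorem exists_pos_algebraMap_le_of_isStrictlyPositive (ha : IsStrictlyPositive a) :
    ∃ m > (0 : ℝ), algebraMap ℝ A m ≤ a := by
  obtain _ | _ := subsingleton_or_nontrivial A
  · exact ⟨1, one_pos, (Subsingleton.elim _ _).le⟩
  · exact (CFC.exists_pos_algebraMap_le_iff ha.isSelfAdjoint).2 fun _ => ha.spectrum_pos

variable [Finite (spectrum ℝ a)]

theorem isStrictlyPositive_fillKernel (ha : 0 ≤ a) (hδ : 0 < δ) :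
    IsStrictlyPositive (fillKernel δ a) := by
  rw [fillKernel, cfc_isStrictlyPositive_iff _ a ((Set.toFinite _).continuousOn _)]
  intro x hx
  split_ifs with h
  · exact hδ
  · exact (spectrum_nonneg_of_nonneg ha hx).lt_of_ne' h

theorem le_fillKernel (ha : IsSelfAdjoint a) (hδ : 0 ≤ δ) : a ≤ fillKernel δ a := by
  conv_lhs => rw [← cfc_id' ℝ a]
  refine cfc_mono (fun x _ => ?_) (by fun_prop) ((Set.toFinite _).continuousOn _)
  split_ifs with h <;> simp [h, hδ]

theorem fillKernel_le_add_algebraMap (ha : IsSelfAdjoint a) (hδ : 0 ≤ δ) :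
    fillKernel δ a ≤ a + algebraMap ℝ A δ := by
  conv_rhs => rw [← cfc_id' ℝ a, ← cfc_add_const δ _ a]
  refine cfc_mono (fun x _ => ?_) ((Set.toFinite _).continuousOn _) (by fun_prop)
  split_ifs with h <;> simp [h, hδ]

theorem exists_fillKernel_le_smul_fillKernel {b : A} [Finite (spectrum ℝ b)]
    (ha : IsSelfAdjoint a) (hb : 0 ≤ b) {c d : ℝ} (hc : 0 ≤ c) (hcd : c < d) (hab : a ≤ c • b) :
    ∃ δ > 0, fillKernel δ a ≤ d • fillKernel 1 b := by
  obtain ⟨m, hm, hmb⟩ := exists_pos_algebraMap_le_of_isStrictlyPositive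
    (isStrictlyPositive_fillKernel hb one_pos)
  have hδ : 0 < (d - c) * m := mul_pos (sub_pos.2 hcd) hm
  refine ⟨(d - c) * m, hδ, ?_⟩
  calc fillKernel ((d - c) * m) a
      ≤ a + algebraMap ℝ A ((d - c) * m) := fillKernel_le_add_algebraMap ha hδ.le
    _ = a + (d - c) • algebraMap ℝ A m := by rw [map_mul, ← Algebra.smul_def]
    _ ≤ c • fillKernel 1 b + (d - c) • fillKernel 1 b := by
        gcongr
        exact hab.trans (smul_le_smul_of_nonneg_left
          (le_fillKernel hb.isSelfAdjoint zero_le_one) hc)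
    _ = d • fillKernel 1 b := by rw [← add_smul, add_sub_cancel]

theorem exists_log_fillKernel_le {b : A} [Finite (spectrum ℝ b)] (ha : 0 ≤ a)
    (hb : 0 ≤ b) {c d : ℝ} (hc : 0 ≤ c) (hcd : c < d) (hab : a ≤ c • b) :
    ∃ δ, CFC.log (fillKernel δ a) ≤ algebraMap ℝ A (Real.log d) + CFC.log b := by
  obtain ⟨δ, hδ, hle⟩ := exists_fillKernel_le_smul_fillKernel ha.isSelfAdjoint hb hc hcd hab
  have hlog := CFC.log_le_log hle (isStrictlyPositive_fillKernel ha hδ)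
  rw [CFC.log_smul' _ (hc.trans_lt hcd) (isStrictlyPositive_fillKernel hb one_pos),
    log_fillKernel_one hb.isSelfAdjoint] at hlog
  exact ⟨δ, hlog⟩

end FillKernel

section PosSemidef

open Matrix

variable {n 𝕜 : Type*} [Fintype n] [RCLike 𝕜]

open scoped MatrixOrder in
theorem trace_mul_le_trace_mul_of_le {A B C : Matrix n n 𝕜} (hA : A.PosSemidef) (hBC : B ≤ C) :
    (A * B).trace ≤ (A * C).trace := by
  classical
  obtain ⟨D, rfl⟩ := CStarAlgebra.nonneg_iff_eq_star_mul_self.1 hA.nonneg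
  have hconj : 0 ≤ (D * (C - B) * star D).trace :=
    ((le_iff.1 hBC).mul_mul_conjTranspose_same D).trace_nonneg
  rwa [trace_mul_cycle, mul_sub, trace_sub, sub_nonneg] at hconj

theorem mulVec_eq_zero_of_posSemidef_smul_sub {A B : Matrix n n 𝕜} (hA : A.PosSemidef) {c : 𝕜}
    (hAB : (c • B - A).PosSemidef) {v : n → 𝕜} (hv : B *ᵥ v = 0) : A *ᵥ v = 0 := by
  have hle : star v ⬝ᵥ A *ᵥ v ≤ 0 := by
    simpa [sub_mulVec, smul_mulVec, hv] using hAB.dotProduct_mulVec_nonneg v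
  exact (hA.dotProduct_mulVec_zero_iff v).1 (hle.antisymm (hA.dotProduct_mulVec_nonneg v))

end PosSemidef

section RelativeEntropy

open Matrix Filter Topology
open scoped MatrixOrder Matrix.Norms.L2Operator

variable {n : Type*} [Fintype n] [DecidableEq n] {ρ σ : Matrix n n ℂ}

theorem mlog_eq_log {M : Matrix n n ℂ} (hM : M.IsHermitian) : mlog M = CFC.log M := by
  rw [mlog, dif_pos hM, CFC.log, hM.cfc_eq]
  rfl

theorem re_trace_mul_mlog_sub_le (hρ : ρ.PosSemidef) (hσ : σ.PosSemidef) {c : ℝ}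
    (hc : 0 < c) (h : ((c : ℂ) • σ - ρ).PosSemidef) :
    ((ρ * mlog ρ).trace - (ρ * mlog σ).trace).re ≤ ρ.trace.re * Real.log c := by
  have hlim : Tendsto (fun d => ρ.trace.re * Real.log d) (𝓝[>] c) (𝓝 (ρ.trace.re * Real.log c)) :=
    ((Real.continuousAt_log hc.ne').tendsto.mono_left nhdsWithin_le_nhds).const_mul _
  refine ge_of_tendsto hlim (eventually_nhdsWithin_of_forall fun d hcd => ?_)
  obtain ⟨δ, hδ⟩ := exists_log_fillKernel_le hρ.nonneg hσ.nonneg hc.le hcd h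
  have htr := (Complex.le_def.1 (trace_mul_le_trace_mul_of_le hρ hδ)).1
  rw [mul_log_fillKernel hρ.1, mul_add, ← Algebra.commutes, ← Algebra.smul_def, trace_add,
    trace_smul, ← mlog_eq_log hρ.1, ← mlog_eq_log hσ.1, Complex.add_re, Complex.smul_re,
    smul_eq_mul] at htr
  rw [Complex.sub_re]
  linarith

theorem maxRelEnt_nonneg (hρ : IsDensity ρ) (hσ : IsDensity σ) : 0 ≤ maxRelEnt ρ σ := by
  refine le_sInf ?_
  rintro _ ⟨r, rfl, h⟩
  have htr : 0 ≤ ((2 : ℝ) ^ r : ℝ) - (1 : ℂ) := by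
    simpa [trace_sub, hρ.2, hσ.2] using h.trace_nonneg
  have hone : (2 : ℝ) ^ (0 : ℝ) ≤ 2 ^ r := by
    rw [Real.rpow_zero]
    exact_mod_cast sub_nonneg.1 htr
  exact_mod_cast (Real.rpow_le_rpow_left_iff one_lt_two).1 hone

theorem relEnt_le_log_of_posSemidef_smul_sub (hρ : IsDensity ρ) (hσ : σ.PosSemidef) {c : ℝ}
    (hc : 0 < c) (h : ((c : ℂ) • σ - ρ).PosSemidef) : relEnt ρ σ ≤ Real.log c := by
  rw [relEnt, if_pos fun v => mulVec_eq_zero_of_posSemidef_smul_sub hρ.1 h,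
    EReal.coe_le_coe_iff]
  simpa [hρ.2] using re_trace_mul_mlog_sub_le hρ.1 hσ hc h

-- `relEnt` is in nats and `maxRelEnt` in bits, whence the factor `log 2`.
theorem maxRelEnt_ge_relEnt_general (hρ : IsDensity ρ) (hσ : σ.PosSemidef) :
    relEnt ρ σ ≤ Real.log 2 * maxRelEnt ρ σ := by
  have hlog : (0 : EReal) < Real.log 2 := by exact_mod_cast Real.log_pos one_lt_two
  rw [← EReal.div_le_iff_le_mul hlog (EReal.coe_ne_top _)]
  refine le_sInf ?_
  rintro _ ⟨r, rfl, h⟩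
  rw [EReal.div_le_iff_le_mul hlog (EReal.coe_ne_top _), ← EReal.coe_mul, mul_comm,
    ← Real.log_rpow two_pos]
  exact relEnt_le_log_of_posSemidef_smul_sub hρ hσ (by positivity) h

end RelativeEntropy

theorem maxRelEnt_ge_relEnt {n : Type*} [Fintype n] [DecidableEq n]
    (ρ σ : Matrix n n ℂ) (hρ : IsDensity ρ) (hσ : IsDensity σ) :
    relEnt ρ σ ≤ maxRelEnt ρ σ := by
  have hlog : (Real.log 2 : EReal) ≤ 1 := by
    exact_mod_cast Real.log_two_lt_d9.le.trans (by norm_num)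
  calc relEnt ρ σ ≤ Real.log 2 * maxRelEnt ρ σ := maxRelEnt_ge_relEnt_general hρ hσ.1
    _ ≤ maxRelEnt ρ σ := mul_le_of_le_one_left (maxRelEnt_nonneg hρ hσ) hlog
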